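/- Fix a ∈ (0,1) and let r_n := √(n/(2a(1−a))). Let C_n := (∫_0^1 t^{a n}(1−t)^{(1−a)n} dt)^{−1} (real exponents). Then for every u ∈ ℝ, (1/r_n) · C_n · (a + u/r_n)^{a n} (1 − a − u/r_n)^{(1−a)n} converges to e^{−u²}/√π as n → ∞ (for n large enough that a + u/r_n ∈ (0,1)). -/

import Mathlib

open MeasureTheory Filter Real

noncomputable def vmPhi (a x : ℝ) : ℝ := a * log (x / a) + (1 - a) * log ((1 - x) / (1 - a))

lemma vm_log_aux {a x : ℝ} (ha : 0 < a) (hx : 0 < x) :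
    a * log (x / a) ≤ x - a - (√x - √a) ^ 2 := by
  have hxa : 0 < x / a := div_pos hx ha
  have h1 : log (x / a) = 2 * log √(x / a) := by rw [Real.log_sqrt hxa.le]; ring
  have h2 := Real.log_le_sub_one_of_pos (Real.sqrt_pos.2 hxa)
  have h3 : a * √(x / a) = √x * √a := by
    rw [Real.sqrt_div hx.le]
    have : √a ≠ 0 := (Real.sqrt_pos.2 ha).ne'
    field_simp
    rw [Real.sq_sqrt ha.le]
  have h4 := Real.sq_sqrt ha.le
  have h5 := Real.sq_sqrt hx.le
  have h6 : a * log (x / a) ≤ a * (2 * (√(x / a) - 1)) := by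
    rw [h1]; gcongr
  nlinarith

lemma vm_sq_aux {a x : ℝ} (ha : 0 < a) (hx : 0 < x) (ha1 : a < 1) (hx1 : x < 1) :
    (x - a) ^ 2 ≤ 4 * (√x - √a) ^ 2 := by
  have h4 := Real.sq_sqrt ha.le
  have h5 := Real.sq_sqrt hx.le
  have h6 : √a ≤ 1 := Real.sqrt_le_one.2 ha1.le
  have h7 : √x ≤ 1 := Real.sqrt_le_one.2 hx1.le
  have e : x - a = (√x - √a) * (√x + √a) := by linear_combination h4 - h5
  rw [e, mul_pow, mul_comm]
  have h8 : (√x + √a) ^ 2 ≤ 2 ^ 2 := by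
    have := Real.sqrt_nonneg x
    have := Real.sqrt_nonneg a
    gcongr; linarith
  nlinarith [sq_nonneg (√x - √a)]

lemma vmPhi_le {a x : ℝ} (ha : 0 < a) (hx : 0 < x) (ha1 : a < 1) (hx1 : x < 1) :
    vmPhi a x ≤ -((x - a) ^ 2 / 2) := by
  have h1 := vm_log_aux ha hx
  have h2 := vm_log_aux (sub_pos.2 ha1) (sub_pos.2 hx1)
  have h3 := vm_sq_aux ha hx ha1 hx1
  have h4 := vm_sq_aux (sub_pos.2 ha1) (sub_pos.2 hx1) (by linarith) (by linarith)
  unfold vmPhi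
  nlinarith

lemma vm_log_lim (s : ℝ) :
    Tendsto (fun r : ℝ => r ^ 2 * (log (1 - s / r) + s / r)) atTop (nhds (-(s ^ 2 / 2))) := by
  have hs : Tendsto (fun r : ℝ => s / r) atTop (nhds 0) := tendsto_const_nhds.div_atTop tendsto_id
  have habs : Tendsto (fun r : ℝ => |s / r|) atTop (nhds 0) := by simpa using hs.abs
  rw [tendsto_iff_norm_sub_tendsto_zero]
  have hb : Tendsto (fun r : ℝ => s ^ 2 * (|s / r| / (1 - |s / r|))) atTop (nhds 0) := by
    have := (habs.div (tendsto_const_nhds.sub habs) (by norm_num : (1:ℝ) - 0 ≠ 0)).const_mul (s ^ 2)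
    simpa using this
  refine squeeze_zero' (Eventually.of_forall fun _ => norm_nonneg _) ?_ hb
  filter_upwards [eventually_gt_atTop 0, habs.eventually_lt_const one_pos] with r hr h1
  have := Real.abs_log_sub_add_sum_range_le h1 2
  simp only [Finset.sum_range_succ, Finset.sum_range_zero] at this
  norm_num at this
  have e : r ^ 2 * (log (1 - s / r) + s / r) - -(s ^ 2 / 2)
      = r ^ 2 * (s / r + (s / r) ^ 2 / 2 + log (1 - s / r)) := by
    field_simp; ring
  rw [e, Real.norm_eq_abs, abs_mul, abs_of_pos (by positivity : 0 < r ^ 2)]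
  have e2 : s ^ 2 * (|s / r| / (1 - |s / r|)) = r ^ 2 * (|s / r| ^ 3 / (1 - |s / r|)) := by
    rw [pow_succ |s / r| 2, sq_abs]
    field_simp
  rw [e2]
  gcongr

lemma vmPhi_lim {a : ℝ} (ha : 0 < a) (ha1 : a < 1) (u : ℝ) :
    Tendsto (fun r : ℝ => (2 * a * (1 - a)) * r ^ 2 * vmPhi a (a + u / r)) atTop
      (nhds (-u ^ 2)) := by
  have hb : 0 < 1 - a := sub_pos.2 ha1
  have h := (((vm_log_lim (-u / a)).const_mul a).add
    ((vm_log_lim (u / (1 - a))).const_mul (1 - a))).const_mul (2 * a * (1 - a))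
  have e : 2 * a * (1 - a) * (a * -((-u / a) ^ 2 / 2) + (1 - a) * -((u / (1 - a)) ^ 2 / 2))
      = -u ^ 2 := by field_simp; ring
  rw [e] at h
  refine h.congr' ?_
  filter_upwards [eventually_gt_atTop 0] with r hr
  have e1 : 1 - -u / a / r = (a + u / r) / a := by field_simp; ring
  have e2 : 1 - u / (1 - a) / r = (1 - (a + u / r)) / (1 - a) := by field_simp; ring
  rw [e1, e2]
  unfold vmPhi
  field_simp
  ring

lemma vm_fact {a x : ℝ} (ha : 0 < a) (hx : 0 < x) (ha1 : a < 1) (hx1 : x < 1) (n : ℝ) :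
    x ^ (a * n) * (1 - x) ^ ((1 - a) * n)
      = exp (n * (a * log a + (1 - a) * log (1 - a))) * exp (n * vmPhi a x) := by
  have hb : 0 < 1 - a := sub_pos.2 ha1
  have hy : 0 < 1 - x := sub_pos.2 hx1
  rw [Real.rpow_def_of_pos hx, Real.rpow_def_of_pos hy, ← Real.exp_add, ← Real.exp_add]
  unfold vmPhi
  rw [Real.log_div hx.ne' ha.ne', Real.log_div hy.ne' hb.ne']
  congr 1
  ring

/-- The rescaled integrand. -/
noncomputable def vmH (a r u : ℝ) : ℝ :=
  (Set.Ioo (0:ℝ) 1).indicator (fun x => exp ((2 * a * (1 - a)) * r ^ 2 * vmPhi a x)) (a + u / r)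

lemma vm_mem {a : ℝ} (ha : 0 < a) (ha1 : a < 1) (u : ℝ) :
    ∀ᶠ r : ℝ in atTop, a + u / r ∈ Set.Ioo (0:ℝ) 1 := by
  have hs : Tendsto (fun r : ℝ => a + u / r) atTop (nhds (a + 0)) :=
    tendsto_const_nhds.add (tendsto_const_nhds.div_atTop tendsto_id)
  rw [add_zero] at hs
  exact hs (Ioo_mem_nhds ha ha1)

lemma vmH_lim {a : ℝ} (ha : 0 < a) (ha1 : a < 1) (u : ℝ) :
    Tendsto (fun r : ℝ => vmH a r u) atTop (nhds (exp (-u ^ 2))) := by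
  refine ((Real.continuous_exp.tendsto _).comp (vmPhi_lim ha ha1 u)).congr' ?_
  filter_upwards [vm_mem ha ha1 u] with r hr
  simp [vmH, Set.indicator_of_mem hr]

lemma vmH_int_lim {a : ℝ} (ha : 0 < a) (ha1 : a < 1) :
    Tendsto (fun r : ℝ => ∫ u, vmH a r u) atTop (nhds √π) := by
  have hb : 0 < 1 - a := sub_pos.2 ha1
  have hg : ∫ u : ℝ, exp (-u ^ 2) = √π := by
    have := integral_gaussian 1
    simpa using this
  rw [← hg]
  have hc : 0 < a * (1 - a) := mul_pos ha hb
  refine tendsto_integral_filter_of_dominated_convergence (fun u => exp (-(a * (1 - a)) * u ^ 2))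
    (Eventually.of_forall fun r => ?_) ?_ (integrable_exp_neg_mul_sq hc)
    (Eventually.of_forall fun u => vmH_lim ha ha1 u)
  · apply Measurable.aestronglyMeasurable
    unfold vmH
    have : Measurable ((Set.Ioo (0:ℝ) 1).indicator
        (fun x => exp ((2 * a * (1 - a)) * r ^ 2 * vmPhi a x))) := by
      apply Measurable.indicator _ measurableSet_Ioo
      unfold vmPhi
      fun_prop
    exact this.comp (by fun_prop)
  · filter_upwards [eventually_gt_atTop 0] with r hr
    refine Eventually.of_forall fun u => ?_
    unfold vmH
    by_cases h : a + u / r ∈ Set.Ioo (0:ℝ) 1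
    · rw [Set.indicator_of_mem h, Real.norm_eq_abs, abs_of_pos (exp_pos _)]
      apply Real.exp_le_exp.2
      have h1 := vmPhi_le ha h.1 ha1 h.2
      have h2 : (2 * a * (1 - a)) * r ^ 2 * vmPhi a (a + u / r)
          ≤ (2 * a * (1 - a)) * r ^ 2 * -((a + u / r - a) ^ 2 / 2) := by gcongr
      refine h2.trans (le_of_eq ?_)
      field_simp
      ring
    · rw [Set.indicator_of_notMem h]
      simp [exp_nonneg]

lemma vm_int_eq {a : ℝ} (ha : 0 < a) (ha1 : a < 1) {r n : ℝ} (hr : 0 < r)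
    (hn : n = (2 * a * (1 - a)) * r ^ 2) :
    ∫ t in (0:ℝ)..1, t ^ (a * n) * (1 - t) ^ ((1 - a) * n)
      = exp (n * (a * log a + (1 - a) * log (1 - a))) * (r⁻¹ * ∫ u, vmH a r u) := by
  rw [intervalIntegral.integral_of_le zero_le_one, integral_Ioc_eq_integral_Ioo]
  rw [setIntegral_congr_fun measurableSet_Ioo
    (fun x hx => vm_fact ha hx.1 ha1 hx.2 n), integral_const_mul]
  congr 1
  unfold vmH
  rw [← hn]
  have := Measure.integral_comp_div (fun y => (Set.Ioo (0:ℝ) 1).indicator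
    (fun x => exp (n * vmPhi a x)) (a + y)) r
  rw [this, integral_add_left_eq_self, integral_indicator measurableSet_Ioo, abs_of_pos hr,
    smul_eq_mul, inv_mul_cancel_left₀ hr.ne']

/-- Density version of von Mises's binomial Bernstein–von Mises theorem with
uniform prior and constant relative frequency `a`: with
`r_n = √(n/(2a(1−a)))` and `C_n = (∫₀¹ t^{an}(1−t)^{(1−a)n} dt)⁻¹`, the
rescaled posterior density `(1/r_n) C_n (a + u/r_n)^{an} (1 − a − u/r_n)^{(1−a)n}`
converges pointwise to the normal density `e^{−u²}/√π`. -/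
theorem vonMises_binomial_density (a : ℝ) (ha : a ∈ Set.Ioo (0:ℝ) 1) (u : ℝ) :
    Tendsto (fun n : ℕ =>
      (1 / Real.sqrt ((n : ℝ) / (2 * a * (1 - a)))) *
        (∫ t in (0:ℝ)..1, t ^ (a * (n : ℝ)) * (1 - t) ^ ((1 - a) * (n : ℝ)))⁻¹ *
        ((a + u / Real.sqrt ((n : ℝ) / (2 * a * (1 - a)))) ^ (a * (n : ℝ)) *
          (1 - a - u / Real.sqrt ((n : ℝ) / (2 * a * (1 - a)))) ^ ((1 - a) * (n : ℝ))))
      atTop (nhds (Real.exp (-u ^ 2) / Real.sqrt π)) := by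
  obtain ⟨ha0, ha1⟩ := ha
  have hb : 0 < 1 - a := sub_pos.2 ha1
  have hc : 0 < 2 * a * (1 - a) := by positivity
  have hr : Tendsto (fun n : ℕ => √((n : ℝ) / (2 * a * (1 - a)))) atTop atTop :=
    Real.tendsto_sqrt_atTop.comp (tendsto_natCast_atTop_atTop.atTop_div_const hc)
  have h := ((vmH_lim ha0 ha1 u).div (vmH_int_lim ha0 ha1)
    (Real.sqrt_pos.2 Real.pi_pos).ne').comp hr
  refine h.congr' ?_
  filter_upwards [hr.eventually (vm_mem ha0 ha1 u), hr.eventually (eventually_gt_atTop 0)]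
    with n hm hpos
  have hn : (n : ℝ) = (2 * a * (1 - a)) * √((n : ℝ) / (2 * a * (1 - a))) ^ 2 := by
    rw [Real.sq_sqrt (by positivity)]
    field_simp
  rw [vm_int_eq ha0 ha1 hpos hn, sub_sub, vm_fact ha0 hm.1 ha1 hm.2]
  simp only [Function.comp, Pi.div_apply]
  generalize √((n : ℝ) / (2 * a * (1 - a))) = r at *
  have e : vmH a r u = exp (n * vmPhi a (a + u / r)) := by
    rw [vmH, Set.indicator_of_mem hm, ← hn]
  rw [e, mul_inv, mul_inv, inv_inv]
  have := (exp_pos ((n:ℝ) * (a * log a + (1 - a) * log (1 - a)))).ne'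
  generalize exp ((n:ℝ) * (a * log a + (1 - a) * log (1 - a))) = E at *
  field_simp
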